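/- Let F = (f_{i,j}) be a configuration matrix derived from a step matrix E, with column face c(F) = U_1|⋯|U_p and row face r(F) = V_q|⋯|V_1. (i) If the down-shift D_{i,j} acts nontrivially on F and F′ = D_{i,j}F = (f′_{i,j}) is also a configuration matrix derived from E, with row face r(F′) = V′_q|⋯|V′_1, then csgn(D_{i,j}F)·csgn(F) = −(−1)^e, where e = #{y ∈ V′_{i+1} : y > f′_{i+1,j}} + #{y ∈ V_i : y < f_{i,j}}. (ii) If the right-shift R_{i,j} acts nontrivially on F and F″ = R_{i,j}F = (f″_{i,j}) is also a configuration matrix derived from E, with column face c(F″) = U″_1|⋯|U″_p, then csgn(R_{i,j}F)·csgn(F) = −(−1)^{e′}, where e′ = #{y ∈ U_j : y > f_{i,j}} + #{y ∈ U″_{j+1} : y < f″_{i,j+1}}. -/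

import Mathlib

open scoped Classical

namespace SU

/-- min of a finset of naturals (0 for the empty set). -/
def fmin (s : Finset ℕ) : ℕ := s.min.untopD 0
/-- max of a finset of naturals (0 for the empty set). -/
def fmax (s : Finset ℕ) : ℕ := s.max.unbotD 0

/-- `L` is an ordered partition of the finite set `S`. -/
def IsOrderedPartition (S : Finset ℕ) (L : List (Finset ℕ)) : Prop :=
  (∀ B ∈ L, B ≠ ∅) ∧ List.Pairwise Disjoint L ∧ L.foldr (· ∪ ·) ∅ = S

def StepIncreasing (L : List (Finset ℕ)) : Prop :=
  ∀ j, j + 1 < L.length → fmin (L.getD j ∅) < fmax (L.getD (j+1) ∅)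

def StepDecreasing (L : List (Finset ℕ)) : Prop :=
  ∀ j, j + 1 < L.length → fmin (L.getD (j+1) ∅) < fmax (L.getD j ∅)

/-- maximal strictly decreasing consecutive subwords, in order of occurrence. -/
def decRuns : List ℕ → List (List ℕ)
  | [] => []
  | a :: l =>
    match decRuns l with
    | [] => [[a]]
    | r :: rs => if r.headD 0 < a then (a :: r) :: rs else [a] :: r :: rs

/-- maximal strictly increasing consecutive subwords, in order of occurrence. -/
def incRuns : List ℕ → List (List ℕ)
  | [] => []
  | a :: l =>
    match incRuns l with
    | [] => [[a]]
    | r :: rs => if a < r.headD 0 then (a :: r) :: rs else [a] :: r :: rs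

/-- The word `σ(1) σ(2) ⋯ σ(n)` of a permutation, with values in `{1,…,n}`. -/
def permWord (n : ℕ) (σ : Equiv.Perm (Fin n)) : List ℕ :=
  List.ofFn (fun k => ((σ k : ℕ) + 1))

def decBlocks (w : List ℕ) : List (Finset ℕ) := (decRuns w).map List.toFinset
def incBlocks (w : List ℕ) : List (Finset ℕ) := (incRuns w).map List.toFinset

end SU


open scoped Classical

namespace SU

def inversions (w : List ℕ) : ℕ :=
  ((Finset.range w.length ×ˢ Finset.range w.length).filter
    (fun ab => ab.1 < ab.2 ∧ w.getD ab.2 0 < w.getD ab.1 0)).card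

/-- Sign of the permutation taking the increasing word to the concatenation of the
blocks of `L`, each listed in increasing order. -/
def psgn (L : List (Finset ℕ)) : ℤ :=
  (-1) ^ inversions ((L.map (fun s => s.sort (· ≤ ·))).flatten)

def shuffSgn (M N : Finset ℕ) : ℤ := psgn [M, N]

/-- degree of an ordered partition: `Σ (#block − 1)`. -/
def degp (L : List (Finset ℕ)) : ℕ := (L.map (fun s => s.card - 1)).sum

def eps1 (L : List (Finset ℕ)) : ℕ :=
  ∑ k ∈ Finset.range L.length, (L.length - 1 - k) * (L.getD k ∅).card

def sgn1 (L : List (Finset ℕ)) : ℤ := (-1) ^ eps1 L * psgn L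
def sgn2 (L : List (Finset ℕ)) : ℤ :=
  (-1) ^ (eps1 L + Nat.choose (L.length - 1) 2) * psgn L
def rsgn (L : List (Finset ℕ)) : ℤ :=
  (-1) ^ (∑ k ∈ Finset.range L.length, (L.getD k ∅).card * ((L.getD k ∅).card - 1) / 2)

/-- Entry of a matrix, with `0` outside the index range; `i` counts rows from the top,
`j` counts columns from the left, both 0-based. -/
def entry {q p : ℕ} (M : Matrix (Fin q) (Fin p) ℕ) (i j : ℕ) : ℕ :=
  if h : i < q ∧ j < p then M ⟨i, h.1⟩ ⟨j, h.2⟩ else 0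

def colBlock {q p : ℕ} (M : Matrix (Fin q) (Fin p) ℕ) (j : ℕ) : Finset ℕ :=
  ((Finset.range q).image (fun i => entry M i j)).erase 0

def rowBlock {q p : ℕ} (M : Matrix (Fin q) (Fin p) ℕ) (i : ℕ) : Finset ℕ :=
  ((Finset.range p).image (fun j => entry M i j)).erase 0

/-- column face `c(O) = U_1|⋯|U_p`. -/
def colFace {q p : ℕ} (M : Matrix (Fin q) (Fin p) ℕ) : List (Finset ℕ) :=
  (List.range p).map (colBlock M)

/-- row face `r(O) = V_q|⋯|V_1` (rows listed from bottom to top). -/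
def rowFace {q p : ℕ} (M : Matrix (Fin q) (Fin p) ℕ) : List (Finset ℕ) :=
  ((List.range q).map (rowBlock M)).reverse

/-- set of nonzero entries of a matrix. -/
def entrySet {q p : ℕ} (M : Matrix (Fin q) (Fin p) ℕ) : Finset ℕ :=
  (((Finset.range q) ×ˢ (Finset.range p)).image (fun ij => entry M ij.1 ij.2)).erase 0

def IsOrderedMatrix {q p : ℕ} (M : Matrix (Fin q) (Fin p) ℕ) : Prop :=
  0 < q ∧ 0 < p ∧
  entrySet M = Finset.Icc 1 (p + q - 1) ∧
  (∀ i < q, ∃ j < p, entry M i j ≠ 0) ∧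
  (∀ j < p, ∃ i < q, entry M i j ≠ 0) ∧
  (∀ i₁ j₁ i₂ j₂, entry M i₁ j₁ ≠ 0 → entry M i₂ j₂ ≠ 0 →
      entry M i₁ j₁ = entry M i₂ j₂ → i₁ = i₂ ∧ j₁ = j₂) ∧
  (∀ i j₁ j₂, j₁ < j₂ → entry M i j₁ ≠ 0 → entry M i j₂ ≠ 0 → entry M i j₁ < entry M i j₂) ∧
  (∀ j i₁ i₂, i₁ < i₂ → entry M i₁ j ≠ 0 → entry M i₂ j ≠ 0 → entry M i₁ j < entry M i₂ j)

def IsStepMatrix {q p : ℕ} (M : Matrix (Fin q) (Fin p) ℕ) : Prop :=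
  IsOrderedMatrix M ∧
  (∀ i j₁ j₂ j₃, j₁ ≤ j₂ → j₂ ≤ j₃ → entry M i j₁ ≠ 0 → entry M i j₃ ≠ 0 → entry M i j₂ ≠ 0) ∧
  (∀ j i₁ i₂ i₃, i₁ ≤ i₂ → i₂ ≤ i₃ → entry M i₁ j ≠ 0 → entry M i₃ j ≠ 0 → entry M i₂ j ≠ 0) ∧
  (∃! i, entry M i i ≠ 0) ∧
  (∀ i₁ i₂, entry M (i₁+1) i₁ ≠ 0 → entry M (i₂+1) i₂ ≠ 0 → i₁ = i₂) ∧
  (∀ i₁ i₂, entry M i₁ (i₁+1) ≠ 0 → entry M i₂ (i₂+1) ≠ 0 → i₁ = i₂)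

def DCond {q p : ℕ} (M : Matrix (Fin q) (Fin p) ℕ) (i j : ℕ) : Prop :=
  i + 1 < q ∧ j < p ∧ entry M (i+1) j = 0 ∧ entry M i j ≠ 0 ∧
  (∃ k < p, k ≠ j ∧ entry M i k ≠ 0) ∧
  (∀ ℓ < j, entry M (i+1) ℓ < entry M i j) ∧
  (∀ ℓ, j < ℓ → ℓ < p → entry M (i+1) ℓ ≠ 0 → entry M i j < entry M (i+1) ℓ)

/-- the down-shift operator `D_{i,j}` (0-based indices). -/
noncomputable def Dop {q p : ℕ} (M : Matrix (Fin q) (Fin p) ℕ) (i j : ℕ) :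
    Matrix (Fin q) (Fin p) ℕ :=
  if DCond M i j then
    Matrix.of fun a b =>
      if (a : ℕ) = i ∧ (b : ℕ) = j then 0
      else if (a : ℕ) = i + 1 ∧ (b : ℕ) = j then entry M i j
      else M a b
  else M

def RCond {q p : ℕ} (M : Matrix (Fin q) (Fin p) ℕ) (i j : ℕ) : Prop :=
  j + 1 < p ∧ i < q ∧ entry M i (j+1) = 0 ∧ entry M i j ≠ 0 ∧
  (∃ k < q, k ≠ i ∧ entry M k j ≠ 0) ∧
  (∀ ℓ < i, entry M ℓ (j+1) < entry M i j) ∧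
  (∀ ℓ, i < ℓ → ℓ < q → entry M ℓ (j+1) ≠ 0 → entry M i j < entry M ℓ (j+1))

/-- the right-shift operator `R_{i,j}` (0-based indices). -/
noncomputable def Rop {q p : ℕ} (M : Matrix (Fin q) (Fin p) ℕ) (i j : ℕ) :
    Matrix (Fin q) (Fin p) ℕ :=
  if RCond M i j then
    Matrix.of fun a b =>
      if (a : ℕ) = i ∧ (b : ℕ) = j then 0
      else if (a : ℕ) = i ∧ (b : ℕ) = j + 1 then entry M i j
      else M a b
  else M

inductive Shift
  | D (i j : ℕ)
  | R (i j : ℕ)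

noncomputable def applyShift {q p : ℕ} (g : Shift) (M : Matrix (Fin q) (Fin p) ℕ) :
    Matrix (Fin q) (Fin p) ℕ :=
  match g with
  | .D i j => Dop M i j
  | .R i j => Rop M i j

/-- `F` is obtained from `E` by a sequence of shift operators in which the down-shifts
occur with nondecreasing row indices and the right-shifts with nondecreasing column
indices (the list records the operators in order of application). -/
def DerivedFrom {q p : ℕ} (E F : Matrix (Fin q) (Fin p) ℕ) : Prop :=
  ∃ L : List Shift,
    (∀ i₁ j₁ i₂ j₂, List.Sublist [Shift.D i₁ j₁, Shift.D i₂ j₂] L → i₁ ≤ i₂) ∧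
    (∀ i₁ j₁ i₂ j₂, List.Sublist [Shift.R i₁ j₁, Shift.R i₂ j₂] L → j₁ ≤ j₂) ∧
    F = L.foldl (fun M g => applyShift g M) E

def IsConfigMatrix {q p : ℕ} (F : Matrix (Fin q) (Fin p) ℕ) : Prop :=
  IsOrderedMatrix F ∧ ∃ E, IsStepMatrix E ∧ DerivedFrom E F

/-- configuration sign of `F` derived from the step matrix `E`. -/
def csgnFrom {q p : ℕ} (E F : Matrix (Fin q) (Fin p) ℕ) : ℤ :=
  (-1) ^ Nat.choose q 2 * rsgn (colFace E) * sgn1 (rowFace F) * sgn2 (colFace E) *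
    sgn2 (colFace F)

noncomputable def csgn {q p : ℕ} (F : Matrix (Fin q) (Fin p) ℕ) : ℤ :=
  if h : ∃ E, IsStepMatrix E ∧ DerivedFrom E F then csgnFrom h.choose F else 1

end SU
section CoreC
open scoped Classical

namespace SU

/-- the row (0-based) of column `j` containing the value `v`. -/
noncomputable def rowOf {q p : ℕ} (M : Matrix (Fin q) (Fin p) ℕ) (j v : ℕ) : ℕ :=
  if h : ∃ i, i < q ∧ entry M i j = v then h.choose else q

/-- the column (0-based) of row `i` containing the value `v`. -/
noncomputable def colOf {q p : ℕ} (M : Matrix (Fin q) (Fin p) ℕ) (i v : ℕ) : ℕ :=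
  if h : ∃ j, j < p ∧ entry M i j = v then h.choose else p

/-- `R_{M_j}`: right-shifts moving each entry of `S` from column `j` to column `j+1`
(0-based), applied in increasing order of the entries. -/
noncomputable def applyRset {q p : ℕ} (M : Matrix (Fin q) (Fin p) ℕ) (j : ℕ) (S : Finset ℕ) :
    Matrix (Fin q) (Fin p) ℕ :=
  (S.sort (· ≤ ·)).foldl (fun acc v => Rop acc (rowOf acc j v) j) M

/-- `D_{N_i}`: down-shifts moving each entry of `S` from row `i` to row `i+1`
(0-based), applied in increasing order of the entries. -/
noncomputable def applyDset {q p : ℕ} (M : Matrix (Fin q) (Fin p) ℕ) (i : ℕ) (S : Finset ℕ) :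
    Matrix (Fin q) (Fin p) ℕ :=
  (S.sort (· ≤ ·)).foldl (fun acc v => Dop acc i (colOf acc i v)) M

/-- `D_{N_{q−1}} ⋯ D_{N_1} R_{M_{p−1}} ⋯ R_{M_1} E`, where `Mf j` is the set `M_j`
(`1 ≤ j ≤ p−1`) and `Nf i` is the set `N_i` (`1 ≤ i ≤ q−1`). -/
noncomputable def structComposite {q p : ℕ} (E : Matrix (Fin q) (Fin p) ℕ)
    (Mf Nf : ℕ → Finset ℕ) : Matrix (Fin q) (Fin p) ℕ :=
  (List.range (q-1)).foldl (fun acc i => applyDset acc i (Nf (i+1)))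
    ((List.range (p-1)).foldl (fun acc j => applyRset acc j (Mf (j+1))) E)

variable (K : Type) [CommRing K]

/-- boundary of a basis element of `C_*(P)`. -/
noncomputable def bnd (u : List (Finset ℕ)) : (List (Finset ℕ)) →₀ K :=
  ∑ k ∈ Finset.range u.length,
    ∑ M ∈ (u.getD k ∅).powerset,
      if M ≠ ∅ ∧ M ≠ u.getD k ∅ then
        ((((-1 : ℤ) ^ (degp (u.take k) + M.card)) * shuffSgn M (u.getD k ∅ \ M) : ℤ) : K) •
          Finsupp.single (u.take k ++ M :: (u.getD k ∅ \ M) :: u.drop (k+1)) (1 : K)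
      else 0

/-- `Δ_P` on the top cell `{1,…,m}`: the sum of `csgn F · c(F) ⊗ r(F)` over all
configuration matrices `F` with nonzero entry set `{1,…,m}` (with `Δ_P({1}) = {1}⊗{1}`). -/
noncomputable def deltaTop (m : ℕ) : (List (Finset ℕ) × List (Finset ℕ)) →₀ K :=
  if m = 1 then Finsupp.single ([{1}], [{1}]) 1
  else
    ∑ qq ∈ Finset.Icc 1 m, ∑ pp ∈ Finset.Icc 1 m,
      ∑ G : Fin qq → Fin pp → Fin (m+1),
        if IsConfigMatrix (Matrix.of fun i j => ((G i j : ℕ))) ∧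
            entrySet (Matrix.of fun i j => ((G i j : ℕ))) = Finset.Icc 1 m then
          ((csgn (Matrix.of fun i j => ((G i j : ℕ))) : ℤ) : K) •
            Finsupp.single (colFace (Matrix.of fun i j => ((G i j : ℕ))),
                            rowFace (Matrix.of fun i j => ((G i j : ℕ)))) 1
        else 0

/-- relabel a subset of `{1,…,#U}` along the order isomorphism `{1,…,#U} ≅ U`. -/
def relabel (U : Finset ℕ) (s : Finset ℕ) : Finset ℕ :=
  s.image (fun i => (U.sort (· ≤ ·)).getD (i - 1) 0)

/-- `Δ_P` on a basis element, via the standard comultiplicative extension with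
Koszul signs. -/
noncomputable def deltaFun : List (Finset ℕ) → ((List (Finset ℕ) × List (Finset ℕ)) →₀ K)
  | [] => Finsupp.single ([], []) 1
  | U :: L =>
      (deltaTop K U.card).sum fun ab c₁ =>
        (deltaFun L).sum fun ab' c₂ =>
          (c₁ * c₂ * (((-1 : ℤ) ^ (degp ab.2 * degp ab'.1) : ℤ) : K)) •
            Finsupp.single (ab.1.map (relabel U) ++ ab'.1, ab.2.map (relabel U) ++ ab'.2) 1

/-- linear extension of `Δ_P`. -/
noncomputable def deltaChain (f : (List (Finset ℕ)) →₀ K) :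
    (List (Finset ℕ) × List (Finset ℕ)) →₀ K :=
  f.sum fun u c => c • deltaFun K u

/-- `∂⊗1 + 1⊗∂` on the (concrete model of the) tensor square. -/
noncomputable def bndTensor (t : (List (Finset ℕ) × List (Finset ℕ)) →₀ K) :
    (List (Finset ℕ) × List (Finset ℕ)) →₀ K :=
  t.sum fun ab c =>
    c • ((bnd K ab.1).sum (fun a' c' => c' • Finsupp.single (a', ab.2) (1 : K)) +
         (((-1 : ℤ) ^ degp ab.1 : ℤ) : K) •
           (bnd K ab.2).sum (fun b' c' => c' • Finsupp.single (ab.1, b') (1 : K)))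

end SU
end CoreC

/-! A down-shift interchanges two entries of one column, so it keeps the column face, and every
factor of `csgn` except the sign of the row face cancels from `csgn (D F) * csgn F`. On the row
face it moves one element `x` into an adjacent block. This changes `eps1` by one, which gives the
leading minus sign. In the word of the row face, `x` jumps over the larger elements of the block
on its left and the smaller elements of the block on its right, which gives the exponent. As the
row face lists the rows from bottom to top, the block on the left is the row `x` moves into. A
right-shift is a down-shift of the transpose, acting on the column face, which runs the other
way. -/

namespace SU

section SortedList

variable {α : Type*} [LinearOrder α]

lemma sort_union_of_forall_lt {s t : Finset α} (h : ∀ a ∈ s, ∀ b ∈ t, a < b) :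
    (s ∪ t).sort (· ≤ ·) = s.sort (· ≤ ·) ++ t.sort (· ≤ ·) := by
  have sorted : (s.sort (· ≤ ·) ++ t.sort (· ≤ ·)).SortedLT := by
    rw [List.sortedLT_iff_pairwise, List.pairwise_append]
    exact ⟨s.sortedLT_sort.pairwise, t.sortedLT_sort.pairwise, by simpa using h⟩
  exact (s ∪ t).sortedLT_sort.eq_of_mem_iff sorted (by simp)

lemma sort_eq_append_of_notMem {s : Finset α} {x : α} (hx : x ∉ s) :
    s.sort (· ≤ ·) =
      (s.filter (· < x)).sort (· ≤ ·) ++ (s.filter (x < ·)).sort (· ≤ ·) := by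
  rw [← sort_union_of_forall_lt (by grind [Finset.mem_sort])]
  congr 1
  ext y
  grind

lemma sort_insert_eq_append (s : Finset α) (x : α) :
    (insert x s).sort (· ≤ ·) =
      (s.filter (· < x)).sort (· ≤ ·) ++ x :: (s.filter (x < ·)).sort (· ≤ ·) := by
  rw [← Finset.sort_insert (· ≤ ·) (by grind [Finset.mem_sort]) (by simp),
    ← sort_union_of_forall_lt (by grind [Finset.mem_sort])]
  congr 1
  ext y
  grind

end SortedList

lemma inversions_eq_sum (w : List ℕ) : inversions w =
    ∑ a ∈ Finset.range w.length, ∑ b ∈ Finset.range w.length,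
      if a < b ∧ w.getD b 0 < w.getD a 0 then 1 else 0 := by
  rw [inversions, Finset.card_filter, Finset.sum_product]

lemma countP_eq_sum_getD (P : ℕ → Prop) [DecidablePred P] (w : List ℕ) :
    w.countP P = ∑ b ∈ Finset.range w.length, if P (w.getD b 0) then 1 else 0 := by
  induction w with
  | nil => simp
  | cons a w ih => simp [Finset.sum_range_succ', -Finset.sum_boole, List.countP_cons, ih]

lemma inversions_cons (a : ℕ) (w : List ℕ) :
    inversions (a :: w) = w.countP (· < a) + inversions w := by
  rw [inversions_eq_sum, inversions_eq_sum, countP_eq_sum_getD, List.length_cons,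
    Finset.sum_range_succ', add_comm]
  simp [Finset.sum_range_succ', -Finset.sum_boole]

lemma inversions_cons_append_add_countP (x : ℕ) (m t : List ℕ) :
    inversions (x :: (m ++ t)) + m.countP (x < ·) =
      inversions (m ++ x :: t) + m.countP (· < x) := by
  induction m with
  | nil => simp
  | cons b m ih =>
    simp only [List.cons_append, inversions_cons, List.countP_cons, List.countP_append] at ih ⊢
    grind

lemma inversions_append_cons_append_add_countP (s : List ℕ) (x : ℕ) (m t : List ℕ) :
    inversions (s ++ x :: (m ++ t)) + m.countP (x < ·) =
      inversions (s ++ (m ++ x :: t)) + m.countP (· < x) := by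
  induction s with
  | nil => exact inversions_cons_append_add_countP x m t
  | cons a s ih =>
    simp only [List.cons_append, inversions_cons, List.countP_append, List.countP_cons] at ih ⊢
    grind

/-- The word obtained by writing out the blocks of `L` in order, each block increasingly; its
inversions define `psgn L`. -/
def blockWord (L : List (Finset ℕ)) : List ℕ :=
  (L.map fun s => s.sort (· ≤ ·)).flatten

lemma psgn_eq (L : List (Finset ℕ)) : psgn L = (-1) ^ inversions (blockWord L) := rfl

lemma eps1_cons (X : Finset ℕ) (L : List (Finset ℕ)) :
    eps1 (X :: L) = L.length * X.card + eps1 L := by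
  rw [eps1, List.length_cons, Finset.sum_range_succ', add_comm]
  congr 1
  refine Finset.sum_congr rfl fun k _ => ?_
  rw [List.getD_cons_succ, add_tsub_cancel_right, Nat.sub_add_eq, Nat.sub_right_comm]

lemma neg_one_pow_mul_self (n : ℕ) : (-1 : ℤ) ^ n * (-1) ^ n = 1 :=
  pow_mul_pow_eq_one n (by norm_num)

lemma sgn1_mul_self (L : List (Finset ℕ)) : sgn1 L * sgn1 L = 1 := by
  rw [sgn1, psgn, ← pow_add, neg_one_pow_mul_self]

lemma sgn2_mul_self (L : List (Finset ℕ)) : sgn2 L * sgn2 L = 1 := by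
  rw [sgn2, psgn, ← pow_add, neg_one_pow_mul_self]

lemma rsgn_mul_self (L : List (Finset ℕ)) : rsgn L * rsgn L = 1 :=
  neg_one_pow_mul_self _

lemma sgn2_mul_sgn2 {L L' : List (Finset ℕ)} (h : L.length = L'.length) :
    sgn2 L * sgn2 L' = sgn1 L * sgn1 L' := by
  simp only [sgn2, sgn1, h, pow_add]
  linear_combination (-1) ^ eps1 L * psgn L * (-1) ^ eps1 L' * psgn L' *
    neg_one_pow_mul_self ((L'.length - 1).choose 2)

section MoveBetweenBlocks

variable (A B : List (Finset ℕ)) {X Y : Finset ℕ} {x : ℕ}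

lemma inversions_blockWord_insert_left_add (hX : x ∉ X) (hY : x ∉ Y) :
    inversions (blockWord (A ++ insert x X :: Y :: B)) + (X.filter (x < ·)).card =
      inversions (blockWord (A ++ X :: insert x Y :: B)) + (Y.filter (· < x)).card := by
  have crossed := inversions_append_cons_append_add_countP
    (blockWord A ++ (X.filter (· < x)).sort (· ≤ ·)) x
    ((X.filter (x < ·)).sort (· ≤ ·) ++ (Y.filter (· < x)).sort (· ≤ ·))
    ((Y.filter (x < ·)).sort (· ≤ ·) ++ blockWord B)
  have countP_gt : ((X.filter (x < ·)).sort (· ≤ ·) ++ (Y.filter (· < x)).sort (· ≤ ·)).countP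
      (x < ·) = (X.filter (x < ·)).card := by
    rw [List.countP_append, List.countP_eq_length.2 (by simp),
      List.countP_eq_zero.2 (by grind [Finset.mem_sort]), Finset.length_sort, add_zero]
  have countP_lt : ((X.filter (x < ·)).sort (· ≤ ·) ++ (Y.filter (· < x)).sort (· ≤ ·)).countP
      (· < x) = (Y.filter (· < x)).card := by
    rw [List.countP_append, List.countP_eq_zero.2 (by grind [Finset.mem_sort]),
      List.countP_eq_length.2 (by simp), Finset.length_sort, zero_add]
  rw [countP_gt, countP_lt] at crossed
  simpa [blockWord, sort_insert_eq_append, sort_eq_append_of_notMem hX,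
    sort_eq_append_of_notMem hY] using crossed

lemma psgn_insert_left_mul_psgn_insert_right (hX : x ∉ X) (hY : x ∉ Y) :
    psgn (A ++ insert x X :: Y :: B) * psgn (A ++ X :: insert x Y :: B) =
      (-1) ^ ((X.filter (x < ·)).card + (Y.filter (· < x)).card) := by
  have h := inversions_blockWord_insert_left_add A B hX hY
  rw [psgn_eq, psgn_eq, ← pow_add]
  exact neg_one_pow_congr (by grind)

lemma eps1_insert_left (hX : x ∉ X) (hY : x ∉ Y) :
    eps1 (A ++ insert x X :: Y :: B) = eps1 (A ++ X :: insert x Y :: B) + 1 := by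
  induction A with
  | nil =>
    simp only [List.nil_append, eps1_cons, Finset.card_insert_of_notMem hX,
      Finset.card_insert_of_notMem hY, List.length_cons]
    ring
  | cons Z A ih =>
    simp only [List.cons_append, eps1_cons, ih, List.length_append, List.length_cons]
    ring

lemma sgn1_insert_left_mul_sgn1_insert_right (hX : x ∉ X) (hY : x ∉ Y) :
    sgn1 (A ++ insert x X :: Y :: B) * sgn1 (A ++ X :: insert x Y :: B) =
      -(-1) ^ ((X.filter (x < ·)).card + (Y.filter (· < x)).card) := by
  rw [← psgn_insert_left_mul_psgn_insert_right A B hX hY, sgn1, sgn1, eps1_insert_left A B hX hY,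
    pow_succ]
  linear_combination (-psgn (A ++ insert x X :: Y :: B) * psgn (A ++ X :: insert x Y :: B)) *
    neg_one_pow_mul_self (eps1 (A ++ X :: insert x Y :: B))

end MoveBetweenBlocks

/-- The family of blocks obtained from `g` by moving the element `x` from block `k` to block
`k + 1`: the effect of a shift operator on the rows or columns of a matrix. -/
def moveSucc (g : ℕ → Finset ℕ) (k x : ℕ) : ℕ → Finset ℕ :=
  Function.update (Function.update g k ((g k).erase x)) (k + 1) (insert x (g (k + 1)))

section MoveSucc

variable (g : ℕ → Finset ℕ) {n k x : ℕ}

lemma moveSucc_apply_succ : moveSucc g k x (k + 1) = insert x (g (k + 1)) :=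
  Function.update_self ..

lemma moveSucc_apply_self : moveSucc g k x k = (g k).erase x := by
  simp [moveSucc]

lemma moveSucc_apply_of_ne {l : ℕ} (h : l ≠ k) (h' : l ≠ k + 1) : moveSucc g k x l = g l := by
  simp [moveSucc, h, h']

lemma map_range_eq_append_cons_cons (hk : k + 1 < n) :
    (List.range n).map g = (List.range k).map g ++ g k :: g (k + 1) ::
      (List.range (n - (k + 2))).map fun l => g (k + 2 + l) := by
  obtain ⟨m, rfl⟩ := Nat.exists_eq_add_of_le (Nat.succ_le_of_lt hk)
  simp [List.range_add, List.range_succ]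

lemma exists_map_range_moveSucc (hk : k + 1 < n) :
    ∃ A B, (List.range n).map g = A ++ g k :: g (k + 1) :: B ∧
      (List.range n).map (moveSucc g k x) =
        A ++ (g k).erase x :: insert x (g (k + 1)) :: B := by
  refine ⟨_, _, map_range_eq_append_cons_cons g hk, ?_⟩
  have before : (List.range k).map (moveSucc g k x) = (List.range k).map g :=
    List.map_congr_left fun l hl => moveSucc_apply_of_ne g (by grind) (by grind)
  have after (l : ℕ) : moveSucc g k x (k + 2 + l) = g (k + 2 + l) :=
    moveSucc_apply_of_ne g (by lia) (by lia)
  rw [map_range_eq_append_cons_cons _ hk, before, moveSucc_apply_self, moveSucc_apply_succ,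
    funext after]

lemma sgn1_map_range_moveSucc (hk : k + 1 < n) (hx : x ∈ g k) (hx' : x ∉ g (k + 1)) :
    sgn1 ((List.range n).map (moveSucc g k x)) * sgn1 ((List.range n).map g) =
      -(-1) ^ (((g k).filter (x < ·)).card + ((moveSucc g k x (k + 1)).filter (· < x)).card) := by
  obtain ⟨A, B, hg, hmove⟩ := exists_map_range_moveSucc g (x := x) hk
  have sign := sgn1_insert_left_mul_sgn1_insert_right A B ((g k).notMem_erase x) hx'
  rw [Finset.insert_erase hx] at sign
  rw [hg, hmove, mul_comm, sign, moveSucc_apply_succ]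
  simp [Finset.filter_erase, Finset.filter_insert]

lemma sgn1_reverse_map_range_moveSucc (hk : k + 1 < n) (hx : x ∈ g k) (hx' : x ∉ g (k + 1)) :
    sgn1 ((List.range n).map (moveSucc g k x)).reverse * sgn1 ((List.range n).map g).reverse =
      -(-1) ^ (((moveSucc g k x (k + 1)).filter (x < ·)).card + ((g k).filter (· < x)).card) := by
  obtain ⟨A, B, hg, hmove⟩ := exists_map_range_moveSucc g (x := x) hk
  have sign := sgn1_insert_left_mul_sgn1_insert_right B.reverse A.reverse hx'
    ((g k).notMem_erase x)
  rw [Finset.insert_erase hx] at sign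
  rw [hg, hmove, moveSucc_apply_succ]
  simpa [Finset.filter_erase, Finset.filter_insert] using sign

end MoveSucc

section Shift

variable {q p : ℕ} {M : Matrix (Fin q) (Fin p) ℕ} {i j : ℕ}

lemma entry_of_not_lt (h : ¬(i < q ∧ j < p)) : entry M i j = 0 :=
  dif_neg h

lemma lt_of_entry_ne_zero (h : entry M i j ≠ 0) : i < q ∧ j < p :=
  not_imp_comm.1 entry_of_not_lt h

lemma entry_transpose (M : Matrix (Fin q) (Fin p) ℕ) (i j : ℕ) :
    entry M.transpose i j = entry M j i := by
  simp only [entry, and_comm, Matrix.transpose_apply]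

lemma mem_rowBlock {v : ℕ} : v ∈ rowBlock M i ↔ v ≠ 0 ∧ ∃ j, entry M i j = v := by
  simp only [rowBlock, Finset.mem_erase, Finset.mem_image, Finset.mem_range]
  refine and_congr_right fun hv => exists_congr fun j => and_iff_right_of_imp fun h => ?_
  exact (lt_of_entry_ne_zero (h ▸ hv)).2

lemma rowBlock_transpose (M : Matrix (Fin q) (Fin p) ℕ) :
    rowBlock M.transpose = colBlock M := by
  ext j v
  simp only [rowBlock, colBlock, entry_transpose]

lemma colBlock_transpose (M : Matrix (Fin q) (Fin p) ℕ) :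
    colBlock M.transpose = rowBlock M := by
  rw [← rowBlock_transpose, Matrix.transpose_transpose]

lemma mem_colBlock {v : ℕ} : v ∈ colBlock M j ↔ v ≠ 0 ∧ ∃ i, entry M i j = v := by
  simp only [← rowBlock_transpose, mem_rowBlock, entry_transpose]

lemma dCond_of_Dop_ne (h : Dop M i j ≠ M) : DCond M i j :=
  not_imp_comm.1 (fun hD => if_neg hD) h

lemma entry_Dop (h : DCond M i j) (a b : ℕ) : entry (Dop M i j) a b =
    if b = j then entry M (Equiv.swap i (i + 1) a) b else entry M a b := by
  obtain ⟨hi, hj, hzero, -⟩ := id h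
  by_cases hab : a < q ∧ b < p
  · have entry_eq (N : Matrix (Fin q) (Fin p) ℕ) : entry N a b = N ⟨a, hab.1⟩ ⟨b, hab.2⟩ :=
      dif_pos hab
    rw [entry_eq, entry_eq, Dop, if_pos h]
    grind [Matrix.of_apply]
  · have swap_eq (hb : b = j) : Equiv.swap i (i + 1) a = a :=
      Equiv.swap_apply_of_ne_of_ne (by lia) (by lia)
    split_ifs with hb
    · rw [swap_eq hb, entry_of_not_lt hab, entry_of_not_lt hab]
    · rw [entry_of_not_lt hab, entry_of_not_lt hab]

lemma entry_Dop_succ (h : DCond M i j) : entry (Dop M i j) (i + 1) j = entry M i j := by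
  rw [entry_Dop h, if_pos rfl, Equiv.swap_apply_right]

lemma colBlock_Dop (h : DCond M i j) : colBlock (Dop M i j) = colBlock M := by
  ext b v
  simp only [mem_colBlock, entry_Dop h]
  by_cases hb : b = j
  · simp only [hb, if_true, (Equiv.swap i (i + 1)).surjective.exists (p := (entry M · j = v))]
  · simp only [hb, if_false]

lemma mem_rowBlock_of_dCond (h : DCond M i j) : entry M i j ∈ rowBlock M i := by
  obtain ⟨-, -, -, hne, -⟩ := h
  exact mem_rowBlock.2 ⟨hne, j, rfl⟩

lemma notMem_rowBlock_succ_of_dCond (h : DCond M i j) : entry M i j ∉ rowBlock M (i + 1) := by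
  obtain ⟨-, -, hzero, hne, -, hleft, hright⟩ := h
  rw [mem_rowBlock]
  rintro ⟨-, l, hl⟩
  obtain hlj | rfl | hjl := lt_trichotomy l j
  · exact (hleft l hlj).ne hl
  · exact hne (hl.symm.trans hzero)
  · have hl' : entry M (i + 1) l ≠ 0 := hl ▸ hne
    exact (hright l hjl (lt_of_entry_ne_zero hl').2 hl').ne' hl

lemma rowBlock_Dop_self (h : DCond M i j)
    (hrow : Set.InjOn (entry M i) (Function.support (entry M i))) :
    rowBlock (Dop M i j) i = (rowBlock M i).erase (entry M i j) := by
  obtain ⟨-, -, hzero, hne, -⟩ := id h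
  ext v
  simp only [Finset.mem_erase, mem_rowBlock, entry_Dop h, Equiv.swap_apply_left]
  constructor
  · rintro ⟨hv, b, rfl⟩
    have hb : b ≠ j := by grind
    rw [if_neg hb] at hv ⊢
    exact ⟨fun heq => hb (hrow hv hne heq), hv, b, rfl⟩
  · rintro ⟨hvj, hv, b, rfl⟩
    have hb : b ≠ j := fun hb => hvj (congrArg _ hb)
    exact ⟨hv, b, if_neg hb⟩

lemma rowBlock_Dop_succ (h : DCond M i j) :
    rowBlock (Dop M i j) (i + 1) = insert (entry M i j) (rowBlock M (i + 1)) := by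
  obtain ⟨-, -, hzero, hne, -⟩ := id h
  ext v
  simp only [Finset.mem_insert, mem_rowBlock, entry_Dop h, Equiv.swap_apply_right]
  constructor
  · rintro ⟨hv, b, rfl⟩
    grind
  · rintro (rfl | ⟨hv, b, rfl⟩)
    · exact ⟨hne, j, if_pos rfl⟩
    · have hb : b ≠ j := fun hb => hv (hb ▸ hzero)
      exact ⟨hv, b, if_neg hb⟩

lemma rowBlock_Dop (h : DCond M i j)
    (hrow : Set.InjOn (entry M i) (Function.support (entry M i))) :
    rowBlock (Dop M i j) = moveSucc (rowBlock M) i (entry M i j) := by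
  funext a
  obtain rfl | ha := eq_or_ne a i
  · rw [rowBlock_Dop_self h hrow, moveSucc_apply_self]
  obtain rfl | ha' := eq_or_ne a (i + 1)
  · rw [rowBlock_Dop_succ h, moveSucc_apply_succ]
  rw [moveSucc_apply_of_ne _ ha ha']
  ext v
  simp only [mem_rowBlock, entry_Dop h, Equiv.swap_apply_of_ne_of_ne ha ha', ite_self]

lemma rCond_iff_dCond_transpose : RCond M i j ↔ DCond M.transpose j i := by
  simp only [RCond, DCond, entry_transpose]

lemma Rop_eq_transpose_Dop (M : Matrix (Fin q) (Fin p) ℕ) (i j : ℕ) :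
    Rop M i j = (Dop M.transpose j i).transpose := by
  unfold Rop Dop
  rw [rCond_iff_dCond_transpose]
  split_ifs
  · ext a b
    simp [entry_transpose, and_comm]
  · rfl

lemma rCond_of_Rop_ne (h : Rop M i j ≠ M) : RCond M i j :=
  not_imp_comm.1 (fun hR => if_neg hR) h

lemma entry_Rop_succ (h : RCond M i j) : entry (Rop M i j) i (j + 1) = entry M i j := by
  rw [Rop_eq_transpose_Dop, entry_transpose, entry_Dop_succ (rCond_iff_dCond_transpose.1 h),
    entry_transpose]

lemma rowBlock_Rop (h : RCond M i j) : rowBlock (Rop M i j) = rowBlock M := by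
  rw [Rop_eq_transpose_Dop, rowBlock_transpose, colBlock_Dop (rCond_iff_dCond_transpose.1 h),
    colBlock_transpose]

lemma colBlock_Rop (h : RCond M i j)
    (hcol : Set.InjOn (entry M · j) (Function.support (entry M · j))) :
    colBlock (Rop M i j) = moveSucc (colBlock M) j (entry M i j) := by
  have hrow : Set.InjOn (entry M.transpose j) (Function.support (entry M.transpose j)) := by
    simpa only [funext (entry_transpose M j)] using hcol
  rw [Rop_eq_transpose_Dop, colBlock_transpose,
    rowBlock_Dop (rCond_iff_dCond_transpose.1 h) hrow, rowBlock_transpose, entry_transpose]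

lemma mem_colBlock_of_rCond (h : RCond M i j) : entry M i j ∈ colBlock M j := by
  rw [← rowBlock_transpose, ← entry_transpose]
  exact mem_rowBlock_of_dCond (rCond_iff_dCond_transpose.1 h)

lemma notMem_colBlock_succ_of_rCond (h : RCond M i j) : entry M i j ∉ colBlock M (j + 1) := by
  rw [← rowBlock_transpose, ← entry_transpose]
  exact notMem_rowBlock_succ_of_dCond (rCond_iff_dCond_transpose.1 h)

end Shift

section ConfigurationSign

variable {q p : ℕ} (E F : Matrix (Fin q) (Fin p) ℕ)

lemma csgnFrom_mul_csgnFrom (G : Matrix (Fin q) (Fin p) ℕ) :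
    csgnFrom E G * csgnFrom E F =
      (sgn1 (rowFace G) * sgn1 (rowFace F)) * (sgn1 (colFace G) * sgn1 (colFace F)) := by
  have same_length : (colFace G).length = (colFace F).length := by simp [colFace]
  rw [← sgn2_mul_sgn2 same_length]
  calc csgnFrom E G * csgnFrom E F
      = ((-1) ^ q.choose 2 * (-1) ^ q.choose 2) * (rsgn (colFace E) * rsgn (colFace E)) *
          (sgn2 (colFace E) * sgn2 (colFace E)) *
          ((sgn1 (rowFace G) * sgn1 (rowFace F)) * (sgn2 (colFace G) * sgn2 (colFace F))) := by
        rw [csgnFrom, csgnFrom]; ring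
    _ = _ := by
        rw [neg_one_pow_mul_self, rsgn_mul_self, sgn2_mul_self, one_mul, one_mul, one_mul]

variable {F} {i j : ℕ}

lemma csgnFrom_Dop_mul_csgnFrom (h : DCond F i j)
    (hrow : Set.InjOn (entry F i) (Function.support (entry F i))) :
    csgnFrom E (Dop F i j) * csgnFrom E F =
      -(-1) ^ (((rowBlock (Dop F i j) (i + 1)).filter (entry F i j < ·)).card +
        ((rowBlock F i).filter (· < entry F i j)).card) := by
  have colFace_eq : colFace (Dop F i j) = colFace F := by rw [colFace, colBlock_Dop h, colFace]
  rw [csgnFrom_mul_csgnFrom, colFace_eq, sgn1_mul_self, mul_one, rowFace, rowFace,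
    rowBlock_Dop h hrow]
  exact sgn1_reverse_map_range_moveSucc _ h.1 (mem_rowBlock_of_dCond h)
    (notMem_rowBlock_succ_of_dCond h)

lemma csgnFrom_Rop_mul_csgnFrom (h : RCond F i j)
    (hcol : Set.InjOn (entry F · j) (Function.support (entry F · j))) :
    csgnFrom E (Rop F i j) * csgnFrom E F =
      -(-1) ^ (((colBlock F j).filter (entry F i j < ·)).card +
        ((colBlock (Rop F i j) (j + 1)).filter (· < entry F i j)).card) := by
  have rowFace_eq : rowFace (Rop F i j) = rowFace F := by rw [rowFace, rowBlock_Rop h, rowFace]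
  rw [csgnFrom_mul_csgnFrom, rowFace_eq, sgn1_mul_self, one_mul, colFace, colFace,
    colBlock_Rop h hcol]
  exact sgn1_map_range_moveSucc _ h.1 (mem_colBlock_of_rCond h) (notMem_colBlock_succ_of_rCond h)

end ConfigurationSign

theorem statement5_general {q p : ℕ} (E F : Matrix (Fin q) (Fin p) ℕ)
    (hrow : ∀ i, Set.InjOn (entry F i) (Function.support (entry F i)))
    (hcol : ∀ j, Set.InjOn (entry F · j) (Function.support (entry F · j))) :
    (∀ i j, Dop F i j ≠ F →
      csgnFrom E (Dop F i j) * csgnFrom E F =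
        -(-1 : ℤ) ^
          (((rowBlock (Dop F i j) (i + 1)).filter
              (fun y => entry (Dop F i j) (i + 1) j < y)).card +
           ((rowBlock F i).filter (fun y => y < entry F i j)).card)) ∧
    (∀ i j, Rop F i j ≠ F →
      csgnFrom E (Rop F i j) * csgnFrom E F =
        -(-1 : ℤ) ^
          (((colBlock F j).filter (fun y => entry F i j < y)).card +
           ((colBlock (Rop F i j) (j + 1)).filter
              (fun y => y < entry (Rop F i j) i (j + 1))).card)) := by
  constructor
  · intro i j hne
    have hD := dCond_of_Dop_ne hne
    rw [entry_Dop_succ hD]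
    exact csgnFrom_Dop_mul_csgnFrom E hD (hrow i)
  · intro i j hne
    have hR := rCond_of_Rop_ne hne
    rw [entry_Rop_succ hR]
    exact csgnFrom_Rop_mul_csgnFrom E hR (hcol j)

lemma injOn_support_row_of_isOrderedMatrix {q p : ℕ} {F : Matrix (Fin q) (Fin p) ℕ}
    (hF : IsOrderedMatrix F) (i : ℕ) : Set.InjOn (entry F i) (Function.support (entry F i)) := by
  obtain ⟨-, -, -, -, -, distinct, -, -⟩ := hF
  exact fun j₁ h₁ j₂ h₂ h => (distinct _ _ _ _ h₁ h₂ h).2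

lemma injOn_support_col_of_isOrderedMatrix {q p : ℕ} {F : Matrix (Fin q) (Fin p) ℕ}
    (hF : IsOrderedMatrix F) (j : ℕ) :
    Set.InjOn (entry F · j) (Function.support (entry F · j)) := by
  obtain ⟨-, -, -, -, -, distinct, -, -⟩ := hF
  exact fun i₁ h₁ i₂ h₂ h => (distinct _ _ _ _ h₁ h₂ h).1

/-- Let `F` be a configuration matrix derived from a step matrix `E`.
(i) If `D_{i,j}` acts nontrivially on `F` and `F' = D_{i,j}F` is again a configuration
matrix derived from `E`, then `csgn(F')·csgn(F) = −(−1)^e` with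
`e = #{y ∈ V'_{i+1} : y > f'_{i+1,j}} + #{y ∈ V_i : y < f_{i,j}}`.
(ii) If `R_{i,j}` acts nontrivially on `F` and `F'' = R_{i,j}F` is again a configuration
matrix derived from `E`, then `csgn(F'')·csgn(F) = −(−1)^{e'}` with
`e' = #{y ∈ U_j : y > f_{i,j}} + #{y ∈ U''_{j+1} : y < f''_{i,j+1}}`.
(Indices of matrix positions are 0-based here; `V_i` denotes `rowBlock F i`, the set of
nonzero entries of the row of position `(i, ·)`, and `U_j` denotes `colBlock F j`.) -/
theorem statement5 {q p : ℕ} (E F : Matrix (Fin q) (Fin p) ℕ)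
    (hE : IsStepMatrix E) (hF : IsOrderedMatrix F) (hd : DerivedFrom E F) :
    (∀ i j, Dop F i j ≠ F → IsOrderedMatrix (Dop F i j) → DerivedFrom E (Dop F i j) →
      csgnFrom E (Dop F i j) * csgnFrom E F =
        -(-1 : ℤ) ^
          (((rowBlock (Dop F i j) (i+1)).filter
              (fun y => entry (Dop F i j) (i+1) j < y)).card +
           ((rowBlock F i).filter (fun y => y < entry F i j)).card)) ∧
    (∀ i j, Rop F i j ≠ F → IsOrderedMatrix (Rop F i j) → DerivedFrom E (Rop F i j) →
      csgnFrom E (Rop F i j) * csgnFrom E F =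
        -(-1 : ℤ) ^
          (((colBlock F j).filter (fun y => entry F i j < y)).card +
           ((colBlock (Rop F i j) (j+1)).filter
              (fun y => y < entry (Rop F i j) i (j+1))).card)) := by
  have general := statement5_general E F (injOn_support_row_of_isOrderedMatrix hF)
    (injOn_support_col_of_isOrderedMatrix hF)
  exact ⟨fun i j hne _ _ => general.1 i j hne, fun i j hne _ _ => general.2 i j hne⟩

end SU
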